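/- arXiv:math/0508171 — 4 statements merged into one kernel-verified Lean document; each statement's English description precedes it below -/
import Mathlib

section
/- For every τ > 0, the matrix I + τL is invertible, (I + τL)^{−1} is entrywise nonnegative, and its (i,j) entry is strictly positive if and only if j is reachable from i in Γ; equivalently, the reachability matrix of Γ equals sgn((I + τL)^{−1}), applied entrywise. -/
/-!
The `j`-th coordinate of a row vector `c` multiplied by `1 + τ • Lap W` is
`c j + τ * ∑ k, W k j * (c j - c k)` (`vecMul_apply`). Everything follows from a minimum principle
for this expression (`minimum_principle`): on a set `S` of vertices that no arc enters from
outside, if the expression is nonnegative then so is `c`, as one sees at a vertex of `S` where `c`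
is least.

With `S` the whole vertex set, applied to `c` and `-c`, this shows that `1 + τ • Lap W` has trivial
left kernel; applied to a row of the inverse, it shows that the inverse is nonnegative. For `b` the
`i`-th row of the inverse, the equation `b j + τ * ∑ k, W k j * (b j - b k) = δ i j` gives `b i > 0`
and propagates positivity along arcs. Finally, no arc enters the set of vertices not reachable
from `i`, and there the right-hand side vanishes, so the minimum principle for `-b` gives `b ≤ 0`
on this set.
-/

open Matrix Finset

namespace ForestMatrix

variable {n : ℕ}

/-- Reachability from `i` to `j` within a finite set `F` of arcs. -/
def FReach (F : Finset (Fin n × Fin n)) (i j : Fin n) : Prop :=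
  Relation.ReflTransGen (fun a b => (a, b) ∈ F) i j

/-- `F` is (the arc set of) a spanning diverging forest (out-forest) of the digraph whose
positive arc weights are recorded in `W`: all arcs of `F` are arcs of the digraph, every
vertex has indegree at most one, and there are no directed cycles. -/
def IsOutForest (W : Matrix (Fin n) (Fin n) ℝ) (F : Finset (Fin n × Fin n)) : Prop :=
  (∀ e ∈ F, 0 < W e.1 e.2) ∧
  (∀ v : Fin n, ({e ∈ F | e.2 = v} : Finset (Fin n × Fin n)).card ≤ 1) ∧
  (∀ v : Fin n, ¬ Relation.TransGen (fun a b => (a, b) ∈ F) v v)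

/-- The weight of a (sub)digraph: the product of its arc weights. -/
noncomputable def wt (W : Matrix (Fin n) (Fin n) ℝ) (F : Finset (Fin n × Fin n)) : ℝ :=
  ∏ e ∈ F, W e.1 e.2

/-- The weight of a set of digraphs: the sum of their weights. -/
noncomputable def wtSet (W : Matrix (Fin n) (Fin n) ℝ)
    (G : Finset (Finset (Fin n × Fin n))) : ℝ :=
  ∑ F ∈ G, wt W F

open scoped Classical in
/-- The set of all out-forests of the digraph with weight matrix `W`. -/
noncomputable def allOutForests (W : Matrix (Fin n) (Fin n) ℝ) :
    Finset (Finset (Fin n × Fin n)) :=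
  Finset.univ.filter (fun F => IsOutForest W F)

open scoped Classical in
/-- The set of all out-forests with `k` arcs. -/
noncomputable def outForests (W : Matrix (Fin n) (Fin n) ℝ) (k : ℕ) :
    Finset (Finset (Fin n × Fin n)) :=
  Finset.univ.filter (fun F => IsOutForest W F ∧ F.card = k)

/-- The number of arcs of a maximum out-forest; it equals `n - d'` where `d'` is the
out-forest dimension. -/
noncomputable def maxArcs (W : Matrix (Fin n) (Fin n) ℝ) : ℕ :=
  (allOutForests W).sup Finset.card

/-- `σ_k`: the total weight of the out-forests with `k` arcs. -/
noncomputable def sigma (W : Matrix (Fin n) (Fin n) ℝ) (k : ℕ) : ℝ :=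
  wtSet W (outForests W k)

/-- `j` belongs to the tree of the forest `F` diverging from `i`:
`i` is a root of `F` and `j` is reachable from `i` in `F`. -/
def inTreeOf (F : Finset (Fin n × Fin n)) (i j : Fin n) : Prop :=
  (∀ e ∈ F, e.2 ≠ i) ∧ FReach F i j

open scoped Classical in
/-- `Q_k`: the matrix of out-forests with `k` arcs; its `(i,j)` entry is the total weight of
the out-forests with `k` arcs in which `j` belongs to a tree diverging from `i`. -/
noncomputable def Qmat (W : Matrix (Fin n) (Fin n) ℝ) (k : ℕ) :
    Matrix (Fin n) (Fin n) ℝ :=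
  fun i j => wtSet W ((outForests W k).filter (fun F => inTreeOf F i j))

/-- The column Laplacian matrix of the digraph with weight matrix `W`. -/
noncomputable def Lap (W : Matrix (Fin n) (Fin n) ℝ) : Matrix (Fin n) (Fin n) ℝ :=
  fun i j => if i = j then ∑ k ∈ Finset.univ.erase i, W k i else -W i j

/-- `σ(τ) = Σ_{k=0}^{n-d'} σ_k τ^k`. -/
noncomputable def sigmaTau (W : Matrix (Fin n) (Fin n) ℝ) (τ : ℝ) : ℝ :=
  ∑ k ∈ Finset.range (maxArcs W + 1), sigma W k * τ ^ k

/-- `Q(τ) = Σ_{k=0}^{n-d'} Q_k τ^k`. -/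
noncomputable def QTau (W : Matrix (Fin n) (Fin n) ℝ) (τ : ℝ) :
    Matrix (Fin n) (Fin n) ℝ :=
  ∑ k ∈ Finset.range (maxArcs W + 1), τ ^ k • Qmat W k

/-- `J(τ) = σ(τ)⁻¹ Q(τ)`. -/
noncomputable def JTau (W : Matrix (Fin n) (Fin n) ℝ) (τ : ℝ) :
    Matrix (Fin n) (Fin n) ℝ :=
  (sigmaTau W τ)⁻¹ • QTau W τ

/-- `J̃ = σ_{n-d'}⁻¹ Q_{n-d'}`: the normalized matrix of maximum out-forests. -/
noncomputable def Jtil (W : Matrix (Fin n) (Fin n) ℝ) : Matrix (Fin n) (Fin n) ℝ :=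
  (sigma W (maxArcs W))⁻¹ • Qmat W (maxArcs W)

/-- Reachability in the digraph with weight matrix `W`. -/
def Reach (W : Matrix (Fin n) (Fin n) ℝ) (i j : Fin n) : Prop :=
  Relation.ReflTransGen (fun a b => 0 < W a b) i j

/-- `K` is a source knot of the digraph: `K` is the vertex set of a bicomponent
(a maximal strongly connected subgraph) and no arc enters `K` from outside. -/
def IsSourceKnot (W : Matrix (Fin n) (Fin n) ℝ) (K : Finset (Fin n)) : Prop :=
  (∃ i, ∀ j, j ∈ K ↔ (Reach W i j ∧ Reach W j i)) ∧
  (∀ j k, k ∈ K → 0 < W j k → j ∈ K)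

theorem vecMul_apply (W : Matrix (Fin n) (Fin n) ℝ) (τ : ℝ) (c : Fin n → ℝ) (j : Fin n) :
    (c ᵥ* (1 + τ • Lap W)) j = c j + τ * ∑ k, W k j * (c j - c k) := by
  have h : (c ᵥ* Lap W) j = ∑ k, W k j * (c j - c k) := by
    simp only [Matrix.vecMul, dotProduct, Lap]
    rw [← Finset.add_sum_erase _ _ (Finset.mem_univ j),
      ← Finset.add_sum_erase _ (fun k => W k j * (c j - c k)) (Finset.mem_univ j)]
    simp only [if_true, sub_self, mul_zero, zero_add, Finset.mul_sum]
    rw [← Finset.sum_add_distrib]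
    refine Finset.sum_congr rfl fun k hk => ?_
    rw [if_neg (Finset.ne_of_mem_erase hk)]
    ring
  rw [Matrix.vecMul_add, Matrix.vecMul_one, Matrix.vecMul_smul]
  simp [h]

/-- Minimum principle on a set `S` of vertices that no arc enters from outside. -/
theorem minimum_principle {W : Matrix (Fin n) (Fin n) ℝ} (hW0 : ∀ i j, 0 ≤ W i j)
    {τ : ℝ} (hτ : 0 < τ) (S : Set (Fin n)) (hS : ∀ k j, 0 < W k j → j ∈ S → k ∈ S)
    (c : Fin n → ℝ) (hc : ∀ j ∈ S, 0 ≤ (c ᵥ* (1 + τ • Lap W)) j) :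
    ∀ j ∈ S, 0 ≤ c j := by
  intro j hj
  obtain ⟨m, hm, hmin⟩ := S.toFinite.exists_minimalFor c S ⟨j, hj⟩
  have hle : ∀ k ∈ S, c m ≤ c k := fun k hk => (le_total (c m) (c k)).elim id (hmin hk)
  have hsum : ∑ k, W k m * (c m - c k) ≤ 0 := by
    refine Finset.sum_nonpos fun k _ => ?_
    rcases (hW0 k m).eq_or_lt with h | h
    · simp [← h]
    · exact mul_nonpos_of_nonneg_of_nonpos h.le (sub_nonpos.2 (hle k (hS k m h hm)))
  have hcm := hc m hm
  rw [vecMul_apply] at hcm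
  have := mul_nonpos_of_nonneg_of_nonpos hτ.le hsum
  linarith [hle j hj]

theorem isUnit_one_add_smul_Lap {W : Matrix (Fin n) (Fin n) ℝ} (hW0 : ∀ i j, 0 ≤ W i j)
    {τ : ℝ} (hτ : 0 < τ) : IsUnit (1 + τ • Lap W) := by
  rw [← Matrix.vecMul_injective_iff_isUnit]
  refine (injective_iff_map_eq_zero (Matrix.vecMulLinear (1 + τ • Lap W))).2 fun c hc => ?_
  replace hc : c ᵥ* (1 + τ • Lap W) = 0 := hc
  funext j
  refine le_antisymm ?_ ?_
  · have := minimum_principle hW0 hτ Set.univ (fun _ _ _ _ => trivial) (-c)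
      (fun j _ => by simp [Matrix.neg_vecMul, hc]) j trivial
    simpa using this
  · exact minimum_principle hW0 hτ Set.univ (fun _ _ _ _ => trivial) c
      (fun j _ => by simp [hc]) j trivial

/-- For every `τ > 0`, the matrix `I + τL` is invertible, `(I + τL)⁻¹` is
entrywise nonnegative, and its `(i,j)` entry is strictly positive iff `j` is reachable from
`i` in `Γ` (i.e., the reachability matrix of `Γ` is `sgn((I + τL)⁻¹)`). -/
theorem reachability_matrix_eq_sgn_resolvent (n : ℕ) (hn : 1 < n)
    (W : Matrix (Fin n) (Fin n) ℝ)
    (hW0 : ∀ i j, 0 ≤ W i j) (hWd : ∀ i, W i i = 0)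
    (τ : ℝ) (hτ : 0 < τ) :
    IsUnit (1 + τ • Lap W) ∧
    (∀ i j, 0 ≤ (1 + τ • Lap W)⁻¹ i j) ∧
    (∀ i j, 0 < (1 + τ • Lap W)⁻¹ i j ↔ Reach W i j) := by
  have hu := isUnit_one_add_smul_Lap hW0 hτ
  have hrow : ∀ i j, ((1 + τ • Lap W)⁻¹ i ᵥ* (1 + τ • Lap W)) j =
      (1 : Matrix (Fin n) (Fin n) ℝ) i j := fun i j => by
    rw [← Matrix.mul_apply_eq_vecMul, Matrix.nonsing_inv_mul _ ((Matrix.isUnit_iff_isUnit_det _).1 hu)]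
  have hone : ∀ i j, 0 ≤ (1 : Matrix (Fin n) (Fin n) ℝ) i j := fun i j => by
    rw [Matrix.one_apply]; split_ifs <;> simp
  have hnn : ∀ i j, 0 ≤ (1 + τ • Lap W)⁻¹ i j := fun i j =>
    minimum_principle hW0 hτ Set.univ (fun _ _ _ _ => trivial) _
      (fun j _ => (hone i j).trans_eq (hrow i j).symm) j trivial
  refine ⟨hu, hnn, fun i j => ⟨fun hpos => ?_, fun hr => ?_⟩⟩
  · by_contra hij
    have := minimum_principle hW0 hτ {j | ¬ Reach W i j}
      (fun k j hkj hj hk => hj (hk.tail hkj)) (-(1 + τ • Lap W)⁻¹ i)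
      (fun j hj => by
        have hne : i ≠ j := fun h => hj (h ▸ Relation.ReflTransGen.refl)
        rw [Matrix.neg_vecMul, Pi.neg_apply, hrow, Matrix.one_apply_ne hne, neg_zero]) j hij
    rw [Pi.neg_apply] at this
    linarith
  · set b := (1 + τ • Lap W)⁻¹ i with hb
    -- A zero of `b` at `k` forces the `k`-th equation to read `-τ * ∑ l, W l k * b l = δ i k`.
    have hzero : ∀ k, b k = 0 → (1 : Matrix (Fin n) (Fin n) ℝ) i k = 0 ∧
        ∑ l, W l k * b l = 0 := fun k hk => by
      have h := hrow i k
      rw [← hb, vecMul_apply, hk] at h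
      simp only [zero_sub, mul_neg, Finset.sum_neg_distrib, zero_add] at h
      have h0 : 0 ≤ ∑ l, W l k * b l :=
        Finset.sum_nonneg fun l _ => mul_nonneg (hW0 l k) (hnn i l)
      have h1 := hone i k
      have h2 := mul_nonneg hτ.le h0
      have h3 : τ * ∑ l, W l k * b l = 0 := by linarith
      exact ⟨by linarith, (mul_eq_zero.1 h3).resolve_left hτ.ne'⟩
    induction hr with
    | refl =>
      refine (hnn i i).lt_of_ne' fun h => ?_
      simpa using (hzero i h).1
    | @tail k l _ hkl ih =>
      refine (hnn i l).lt_of_ne' fun h => ?_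
      have := (Finset.sum_eq_zero_iff_of_nonneg
        (fun m _ => mul_nonneg (hW0 m l) (hnn i m))).1 (hzero l h).2 k (Finset.mem_univ k)
      exact (mul_pos hkl ih).ne' this

end ForestMatrix
end

section
/- For any vertices i, j of Γ and any directed path from i to j in Γ, there exists an out-forest F of Γ with either n−d' or n−d'−1 arcs such that F contains every arc of this path and j belongs to a tree of F diverging from i. -/
/-!
Take a maximum out-forest `F₀` and a path with vertex list `l`. Delete from `F₀` every arc entering
a vertex of `l`, and add the arcs of the path (`rerouted`). Now the only arcs entering vertices
of `l` are path arcs, so the head of `l` is a root and all indegrees are at most one. A cycle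
through a vertex of `l` would have to stay in `l` when followed backwards, hence would be a cycle of
path arcs, which is impossible; a cycle avoiding `l` would be a cycle of `F₀`
(`transGen_rerouted`). At most `l.length` arcs were deleted, because indegrees in `F₀` are at most
one, and exactly `l.length - 1` were added, so at most one arc has been lost
(`card_le_card_rerouted`). By maximality of `F₀` none has been gained.
-/

open Matrix Finset

namespace ForestMatrix

variable {n : ℕ}

/-- The arcs of the path with vertex list `l`, as consecutive pairs. -/
def pathArcs (l : List (Fin n)) : Finset (Fin n × Fin n) := (l.zip l.tail).toFinset

/-- The forest `F` with all arcs entering vertices of `l` replaced by the arcs of the path `l`. -/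
def rerouted (F : Finset (Fin n × Fin n)) (l : List (Fin n)) : Finset (Fin n × Fin n) :=
  {e ∈ F | e.2 ∉ l} ∪ pathArcs l

lemma mem_pathArcs {l : List (Fin n)} {e : Fin n × Fin n} :
    e ∈ pathArcs l ↔ ∃ k, ∃ h : k + 1 < l.length, e = (l[k], l[k + 1]) := by
  simp only [pathArcs, List.mem_toFinset, List.mem_iff_getElem, List.length_zip,
    List.length_tail, List.getElem_zip, List.getElem_tail]
  constructor
  · rintro ⟨k, h, rfl⟩
    exact ⟨k, by omega, rfl⟩
  · rintro ⟨k, h, rfl⟩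
    exact ⟨k, by omega, rfl⟩

lemma mem_rerouted {F : Finset (Fin n × Fin n)} {l : List (Fin n)} {e : Fin n × Fin n} :
    e ∈ rerouted F l ↔ (e ∈ F ∧ e.2 ∉ l) ∨ e ∈ pathArcs l := by
  simp [rerouted]

lemma mem_of_mem_pathArcs {l : List (Fin n)} {e : Fin n × Fin n} (h : e ∈ pathArcs l) :
    e.1 ∈ l ∧ e.2 ∈ l := by
  obtain ⟨k, hk, rfl⟩ := mem_pathArcs.1 h
  simp

lemma idxOf_lt_of_mem_pathArcs {l : List (Fin n)} (hl : l.Nodup) {e : Fin n × Fin n}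
    (h : e ∈ pathArcs l) : l.idxOf e.1 < l.idxOf e.2 := by
  obtain ⟨k, hk, rfl⟩ := mem_pathArcs.1 h
  simp [hl.idxOf_getElem]

lemma snd_injOn_pathArcs {l : List (Fin n)} (hl : l.Nodup) :
    Set.InjOn Prod.snd (pathArcs l : Set (Fin n × Fin n)) := by
  intro e he f hf hef
  obtain ⟨k, hk, rfl⟩ := mem_pathArcs.1 he
  obtain ⟨m, hm, rfl⟩ := mem_pathArcs.1 hf
  have := (hl.getElem_inj_iff).1 hef
  obtain rfl : k = m := by omega
  rfl

lemma card_pathArcs {l : List (Fin n)} (hl : l.Nodup) :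
    (pathArcs l).card = l.length - 1 := by
  have hz : (l.zip l.tail).map Prod.snd = l.tail :=
    List.map_snd_zip (by simp)
  have hnd : (l.zip l.tail).Nodup :=
    List.Nodup.of_map Prod.snd (by rw [hz]; exact hl.tail)
  rw [pathArcs, List.toFinset_card_of_nodup hnd]
  simp

/-- Walks in the rerouted digraph: backwards from a path vertex they stay on the path and go
strictly towards its head, and a walk ending off the path either starts on it or lies in `F`. -/
lemma transGen_rerouted {F : Finset (Fin n × Fin n)} {l : List (Fin n)} (hl : l.Nodup)
    {a b : Fin n} (h : Relation.TransGen (fun a b => (a, b) ∈ rerouted F l) a b) :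
    (a ∈ l ∧ b ∈ l ∧ l.idxOf a < l.idxOf b) ∨
      (b ∉ l ∧ (a ∈ l ∨ Relation.TransGen (fun a b => (a, b) ∈ F) a b)) := by
  induction h with
  | single h =>
    rcases mem_rerouted.1 h with ⟨hF, hb⟩ | hP
    · exact Or.inr ⟨hb, Or.inr (.single hF)⟩
    · exact Or.inl ⟨(mem_of_mem_pathArcs hP).1, (mem_of_mem_pathArcs hP).2,
        idxOf_lt_of_mem_pathArcs hl hP⟩
  | tail _ h ih =>
    rcases mem_rerouted.1 h with ⟨hF, hb⟩ | hP
    · refine Or.inr ⟨hb, ?_⟩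
      rcases ih with ih | ⟨_, ih | ih⟩
      · exact Or.inl ih.1
      · exact Or.inl ih
      · exact Or.inr (ih.tail hF)
    · have hm := mem_of_mem_pathArcs hP
      rcases ih with ih | ih
      · exact Or.inl ⟨ih.1, hm.2, ih.2.2.trans (idxOf_lt_of_mem_pathArcs hl hP)⟩
      · exact absurd hm.1 ih.1

lemma isOutForest_rerouted {W : Matrix (Fin n) (Fin n) ℝ} {F : Finset (Fin n × Fin n)}
    (hF : IsOutForest W F) {l : List (Fin n)} (hl : l.Nodup)
    (hchain : l.IsChain (fun a b => 0 < W a b)) : IsOutForest W (rerouted F l) := by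
  refine ⟨fun e he => ?_, fun v => ?_, fun v hv => ?_⟩
  · rcases mem_rerouted.1 he with h | h
    · exact hF.1 e h.1
    · obtain ⟨k, hk, rfl⟩ := mem_pathArcs.1 h
      exact List.isChain_iff_getElem.1 hchain k hk
  · rw [Finset.card_le_one]
    intro e he f hf
    rw [Finset.mem_filter, mem_rerouted] at he hf
    obtain ⟨he | he, hev⟩ := he <;> obtain ⟨hf | hf, hfv⟩ := hf
    · exact Finset.card_le_one.1 (hF.2.1 v) e (by simp [he.1, hev]) f (by simp [hf.1, hfv])
    · exact absurd (hev.trans hfv.symm ▸ (mem_of_mem_pathArcs hf).2) he.2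
    · exact absurd (hfv.trans hev.symm ▸ (mem_of_mem_pathArcs he).2) hf.2
    · exact snd_injOn_pathArcs hl he hf (hev.trans hfv.symm)
  · rcases transGen_rerouted hl hv with h | ⟨h, h' | h'⟩
    · exact lt_irrefl _ h.2.2
    · exact h h'
    · exact hF.2.2 v h'

lemma card_le_card_rerouted {W : Matrix (Fin n) (Fin n) ℝ} {F : Finset (Fin n × Fin n)}
    (hF : IsOutForest W F) {l : List (Fin n)} (hl : l.Nodup) :
    F.card ≤ (rerouted F l).card + 1 := by
  have hdisj : Disjoint {e ∈ F | e.2 ∉ l} (pathArcs l) := by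
    rw [Finset.disjoint_left]
    intro e he hP
    exact (Finset.mem_filter.1 he).2 (mem_of_mem_pathArcs hP).2
  have hin : ({e ∈ F | e.2 ∈ l} : Finset _).card ≤ l.length := by
    rw [← List.toFinset_card_of_nodup hl]
    refine Finset.card_le_card_of_injOn Prod.snd (fun e he => ?_) (fun e he f hf hef => ?_)
    · simp_all
    · simp only [Finset.coe_filter, Set.mem_ofPred_eq] at he hf
      exact Finset.card_le_one.1 (hF.2.1 f.2) e (by simp [he.1, hef]) f (by simp [hf.1])
  have hsplit := Finset.card_filter_add_card_filter_not (s := F) (fun e => e.2 ∈ l)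
  rw [rerouted, Finset.card_union_of_disjoint hdisj, card_pathArcs hl]
  omega

lemma fReach_of_zip_tail_mem {F : Finset (Fin n × Fin n)} {j : Fin n} :
    ∀ (l : List (Fin n)) (i : Fin n), l.head? = some i → l.getLast? = some j →
      (∀ e ∈ l.zip l.tail, e ∈ F) → FReach F i j
  | [], _, h, _, _ => by simp at h
  | [a], i, h, h', _ => by
    simp only [List.head?_cons, List.getLast?_singleton, Option.some.injEq] at h h'
    subst h h'
    exact .refl
  | a :: b :: l, i, h, h', hz => by
    obtain rfl : a = i := by simpa using h
    refine Relation.ReflTransGen.head (b := b) (hz _ (by simp)) ?_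
    refine fReach_of_zip_tail_mem (b :: l) b rfl (by simpa using h') (fun e he => hz e ?_)
    simp only [List.tail_cons, List.zip_cons_cons, List.mem_cons] at he ⊢
    exact Or.inr he

lemma card_le_maxArcs {W : Matrix (Fin n) (Fin n) ℝ} {F : Finset (Fin n × Fin n)}
    (hF : IsOutForest W F) : F.card ≤ maxArcs W :=
  Finset.le_sup (f := Finset.card) (by simpa [allOutForests] using hF)

lemma exists_isOutForest_card_eq_maxArcs (W : Matrix (Fin n) (Fin n) ℝ) :
    ∃ F, IsOutForest W F ∧ F.card = maxArcs W := by
  have hempty : IsOutForest W ∅ := by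
    refine ⟨by simp, by simp, fun v hv => ?_⟩
    obtain ⟨_, h, _⟩ := Relation.TransGen.head'_iff.1 hv
    simp at h
  obtain ⟨F, hF, h⟩ := Finset.exists_mem_eq_sup (allOutForests W)
    ⟨∅, by simpa [allOutForests] using hempty⟩ Finset.card
  exact ⟨F, by simpa [allOutForests] using hF, h.symm⟩

/-- For any vertices `i, j` of `Γ` and any directed path from `i` to `j`
in `Γ` (a nonempty list of distinct vertices, consecutive ones joined by arcs), there exists
an out-forest `F` of `Γ` with either `n−d'` or `n−d'−1` arcs (recall `maxArcs W = n−d'`)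
containing every arc of this path, in which `j` belongs to a tree diverging from `i`. -/
theorem path_extends_to_near_maximum_forest (n : ℕ) (hn : 1 < n)
    (W : Matrix (Fin n) (Fin n) ℝ)
    (hW0 : ∀ i j, 0 ≤ W i j) (hWd : ∀ i, W i i = 0)
    (i j : Fin n) (l : List (Fin n)) (hne : l ≠ [])
    (hhead : l.head? = some i) (hlast : l.getLast? = some j)
    (hnd : l.Nodup) (hchain : l.Chain' (fun a b => 0 < W a b)) :
    ∃ F : Finset (Fin n × Fin n), IsOutForest W F ∧
      (F.card = maxArcs W ∨ F.card + 1 = maxArcs W) ∧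
      (∀ e ∈ l.zip l.tail, e ∈ F) ∧
      inTreeOf F i j := by
  obtain ⟨F, hF, hcard⟩ := exists_isOutForest_card_eq_maxArcs W
  have hF' := isOutForest_rerouted hF hnd hchain
  have hpath : ∀ e ∈ l.zip l.tail, e ∈ rerouted F l := fun e he =>
    mem_rerouted.2 (Or.inr (by simpa [pathArcs] using he))
  refine ⟨rerouted F l, hF', ?_, hpath, fun e he hei => ?_,
    fReach_of_zip_tail_mem l i hhead hlast hpath⟩
  · have h1 := card_le_maxArcs hF'
    have h2 := card_le_card_rerouted hF hnd
    omega
  · have hil : i ∈ l := List.mem_of_head? hhead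
    rcases mem_rerouted.1 he with h | h
    · exact h.2 (hei ▸ hil)
    · have hlt := idxOf_lt_of_mem_pathArcs hnd h
      -- the head of the list has index `0`, so nothing precedes it
      obtain ⟨t, rfl⟩ := List.head?_eq_some_iff.1 hhead
      simp [hei] at hlt

end ForestMatrix
end

section
/- Suppose all arc weights of Γ equal 1 and let σ = det(I + L) (the total number of out-forests of Γ). Then for all vertices i, j: i belongs to a source knot of Γ and j is reachable from i if and only if J_ij(σ²) ≥ σ^{−1}, where J(τ) = (I + τL)^{−1}. Equivalently, the top reachability matrix R̂ of Γ, defined by R̂_ij = 1 if i belongs to a source knot and j is reachable from i and R̂_ij = 0 otherwise, satisfies R̂_ij = 0 exactly when J_ij(σ²) < σ^{−1}. -/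
/-! Every entry of `adj(I + X L)` and the determinant `det(I + X L)` is a polynomial with natural
coefficients (by the matrix forest theorem they count out-forests by number of arcs). This sign
pattern is obtained here without forests, by an induction over columns (`IsLapForm.mem`) based on
an expansion of the adjugate along one column (`adjugate_of_ne`). Since `I + X L` has column sums
`1`, each column of the adjugate sums to the determinant `D`, so every entry `q` of the adjugate
is bounded by `D` coefficientwise.

Let `d = deg D` and let `Q` be the matrix of coefficients of `X ^ d` in the adjugate. Comparing
coefficients of `X ^ (d + 1)` gives `L Q = 0 = Q L`, while `Q ≥ 0` has positive column sums and
`Q i j = 0` unless `j` is reachable from `i`. The support of a nonnegative vector in the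
kernel of `L` is closed under predecessors, and for any vertex `i` of it, walking backwards along
arcs from `i` never leaves the set of vertices reachable from `i`, so `i` is in a source knot
(`reach_of_reach_support`); it follows (`top_pos_iff`) that `Q i j > 0` exactly when `i`
is in a source knot and reaches `j`.

It remains to compare sizes at `τ = σ²`, where `σ = D(1)` (`eval_le_iff`). If `q` has degree `d`,
then `D(τ) ≤ σ τ ^ d ≤ σ q(τ)`. Otherwise `q = 0` or
`σ q(τ) ≤ σ · σ τ ^ (d - 1) = τ ^ d < D(τ)`.
-/

open Matrix Finset

namespace ForestMatrix

variable {n : ℕ}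

/-! ### Sign pattern of the determinant and the adjugate -/

theorem adjugate_eq_det_updateCol {R : Type*} [CommRing R] (A : Matrix (Fin n) (Fin n) R)
    (i j : Fin n) : A.adjugate i j = (A.updateCol i (Pi.single j 1)).det := by
  rw [← cramer_apply, cramer_eq_adjugate_mulVec, mulVec_single_one, col_apply]

/-- Off-diagonal entries of the adjugate, expanded along the old `j`-th column in terms of the
matrix whose `j`-th column is replaced by the unit vector. -/
theorem adjugate_of_ne {R : Type*} [CommRing R] (A : Matrix (Fin n) (Fin n) R)
    {i j : Fin n} (hij : i ≠ j) :
    A.adjugate i j =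
      ∑ k ∈ univ.erase j, -A k j * (A.updateCol j (Pi.single j 1)).adjugate i k := by
  set B := A.updateCol j (Pi.single j 1) with hB
  -- Cramer's determinant with the old `j`-th column in place `i`: the two columns are swapped.
  have h1 : cramer B (fun k => A k j) i = -A.adjugate i j := by
    rw [adjugate_eq_det_updateCol, cramer_apply, ← neg_eq_iff_eq_neg, eq_comm]
    have h := det_permute' (Equiv.swap i j) (A.updateCol i (Pi.single j 1))
    rw [Equiv.Perm.sign_swap hij] at h
    have h2 : (A.updateCol i (Pi.single j 1)).submatrix id (Equiv.swap i j)
        = B.updateCol i (fun k => A k j) := by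
      ext a b
      simp only [submatrix_apply, id, hB, updateCol_apply]
      by_cases hbi : b = i
      · subst hbi; simp [hij.symm]
      · by_cases hbj : b = j
        · subst hbj; simp [hbi]
        · simp [Equiv.swap_apply_of_ne_of_ne hbi hbj, hbi, hbj]
    rw [h2] at h
    rw [h]; simp
  have h3 : B.adjugate i j = 0 := by
    rw [adjugate_eq_det_updateCol]
    refine det_zero_of_column_eq hij fun k => ?_
    simp [hB, updateCol_apply]
  rw [cramer_eq_adjugate_mulVec] at h1
  have h4 : A.adjugate i j = -∑ k, B.adjugate i k * A k j := by
    rw [← neg_eq_iff_eq_neg, ← h1]; rfl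
  rw [h4, ← Finset.add_sum_erase _ _ (mem_univ j), h3, zero_mul, zero_add, ← sum_neg_distrib]
  exact sum_congr rfl fun k _ => by ring

/-- A matrix of Laplacian form with respect to a subsemiring `S`, the elements of `S` being
thought of as the nonnegative scalars: the entries off the diagonal are nonpositive and the
column sums are nonnegative. -/
def IsLapForm {R : Type*} [CommRing R] (S : Subsemiring R) (A : Matrix (Fin n) (Fin n) R) :
    Prop :=
  (∀ i j, i ≠ j → -A i j ∈ S) ∧ ∀ j, ∑ i, A i j ∈ S

theorem det_eq_sum_adjugate {R : Type*} [CommRing R] (A : Matrix (Fin n) (Fin n) R)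
    (j : Fin n) : A.det = ∑ i, (∑ k, A k i) * A.adjugate i j := by
  have h : ∀ k, ∑ i, A k i * A.adjugate i j = if k = j then A.det else 0 := fun k => by
    have := congrFun (congrFun (mul_adjugate A) k) j
    simpa [mul_apply, one_apply] using this
  simp_rw [sum_mul]
  rw [sum_comm]
  simp [h]

/-- Sign pattern of the matrix forest theorem: for a matrix of Laplacian form the determinant
and all entries of the adjugate are nonnegative. The induction is on a set `U` of columns
outside of which the matrix agrees with the identity. -/
theorem IsLapForm.mem {R : Type*} [CommRing R] {S : Subsemiring R} (U : Finset (Fin n)) :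
    ∀ A : Matrix (Fin n) (Fin n) R, IsLapForm S A →
      (∀ j ∉ U, ∀ i, A i j = (1 : Matrix (Fin n) (Fin n) R) i j) →
      A.det ∈ S ∧ ∀ i j, A.adjugate i j ∈ S := by
  induction U using Finset.strongInduction with
  | H U ih =>
  intro A hA hU
  have hcol : ∀ j ∈ U, ∀ i, A.adjugate i j ∈ S := by
    intro j hj i
    set B := A.updateCol j (Pi.single j 1) with hB
    have hBL : IsLapForm S B := by
      refine ⟨fun a b hab => ?_, fun b => ?_⟩
      · by_cases hb : b = j
        · subst hb; simp [hB, hab]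
        · simpa [hB, hb] using hA.1 a b hab
      · by_cases hb : b = j
        · subst hb; simp [hB]
        · simpa [hB, hb] using hA.2 b
    have hBU : ∀ b ∉ U.erase j, ∀ a, B a b = (1 : Matrix (Fin n) (Fin n) R) a b := by
      intro b hb a
      by_cases hbj : b = j
      · subst hbj; simp [hB, one_apply, Pi.single_apply]
      · simpa [hB, hbj] using hU b (fun h => hb (mem_erase.2 ⟨hbj, h⟩)) a
    obtain ⟨hd, ha⟩ := ih _ (erase_ssubset hj) B hBL hBU
    by_cases hij : i = j
    · subst hij; rw [adjugate_eq_det_updateCol]; exact hd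
    · rw [adjugate_of_ne A hij]
      exact sum_mem fun k hk => mul_mem (hA.1 _ _ (ne_of_mem_erase hk)) (ha _ _)
  have hdet : A.det ∈ S := by
    rcases U.eq_empty_or_nonempty with rfl | ⟨j, hj⟩
    · have : A = 1 := by ext a b; exact hU b (by simp) a
      rw [this, det_one]; exact one_mem S
    · rw [det_eq_sum_adjugate A j]
      exact sum_mem fun i _ => mul_mem (hA.2 i) (hcol j hj i)
  refine ⟨hdet, fun i j => ?_⟩
  by_cases hj : j ∈ U
  · exact hcol j hj i
  by_cases hij : i = j
  · subst hij
    rw [adjugate_eq_det_updateCol]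
    have : A.updateCol i (Pi.single i 1) = A := by
      ext a b
      by_cases hb : b = i
      · subst hb; simp [hU _ hj, one_apply, Pi.single_apply]
      · simp [hb]
    rwa [this]
  · rw [adjugate_of_ne A hij]
    refine sum_mem fun k hk => ?_
    rw [hU j hj k, one_apply_ne (ne_of_mem_erase hk), neg_zero, zero_mul]
    exact zero_mem S

/-! ### The polynomial matrix `I + X L` -/

open Polynomial in
/-- The polynomial matrix `I + X L`. -/
noncomputable def polyMat (W : Matrix (Fin n) (Fin n) ℝ) : Matrix (Fin n) (Fin n) ℝ[X] :=
  1 + (X : ℝ[X]) • (Lap W).map C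

open Polynomial in
/-- The real polynomials whose coefficients are natural numbers. -/
noncomputable def natPolys : Subsemiring ℝ[X] := (mapRingHom (Nat.castRingHom ℝ)).rangeS

theorem lap_eq {W : Matrix (Fin n) (Fin n) ℝ} (hWd : ∀ i, W i i = 0) (i j : Fin n) :
    Lap W i j = (if i = j then ∑ k, W k j else 0) - W i j := by
  unfold Lap
  split_ifs with h
  · subst h
    rw [← add_sum_erase _ _ (mem_univ i), hWd]; ring
  · ring

theorem lap_col_sum {W : Matrix (Fin n) (Fin n) ℝ} (hWd : ∀ i, W i i = 0) (j : Fin n) :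
    ∑ i, Lap W i j = 0 := by
  simp [lap_eq hWd]

theorem lap_mul_vec {W : Matrix (Fin n) (Fin n) ℝ} (hWd : ∀ i, W i i = 0) (x : Fin n → ℝ)
    (i : Fin n) : ∑ k, Lap W i k * x k = (∑ k, W k i) * x i - ∑ k, W i k * x k := by
  simp [lap_eq hWd, sub_mul, ite_mul]

theorem vec_mul_lap {W : Matrix (Fin n) (Fin n) ℝ} (hWd : ∀ i, W i i = 0) (y : Fin n → ℝ)
    (j : Fin n) : ∑ k, y k * Lap W k j = y j * (∑ k, W k j) - ∑ k, y k * W k j := by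
  simp [lap_eq hWd, mul_sub, mul_ite]

open Polynomial in
theorem polyMat_apply (W : Matrix (Fin n) (Fin n) ℝ) (i j : Fin n) :
    polyMat W i j = (if i = j then 1 else 0) + X * C (Lap W i j) := by
  simp [polyMat, one_apply]

open Polynomial in
theorem polyMat_col_sum {W : Matrix (Fin n) (Fin n) ℝ} (hWd : ∀ i, W i i = 0) (j : Fin n) :
    ∑ i, polyMat W i j = 1 := by
  simp only [polyMat_apply, sum_add_distrib, ← mul_sum, ← map_sum, lap_col_sum hWd]
  simp

open Polynomial in
theorem polyMat_isLapForm {W : Matrix (Fin n) (Fin n) ℝ} (hWd : ∀ i, W i i = 0)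
    (hW01 : ∀ i j, W i j = 0 ∨ W i j = 1) : IsLapForm natPolys (polyMat W) := by
  refine ⟨fun i j hij => ?_, fun j => ?_⟩
  · rw [polyMat_apply, lap_eq hWd, if_neg hij, if_neg hij]
    rcases hW01 i j with h | h
    · simp [h]
    · simp only [h, zero_sub, map_neg, map_one, zero_add, mul_neg, neg_neg, mul_one]
      exact ⟨X, by simp⟩
  · rw [polyMat_col_sum hWd]; exact one_mem _

open Polynomial in
theorem polyMat_map_eval (W : Matrix (Fin n) (Fin n) ℝ) (τ : ℝ) :
    (evalRingHom τ).mapMatrix (polyMat W) = 1 + τ • Lap W := by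
  ext i j
  simp only [RingHom.mapMatrix_apply, map_apply, polyMat_apply, coe_evalRingHom]
  simp only [Matrix.add_apply, Matrix.smul_apply, one_apply, smul_eq_mul]
  split_ifs <;> simp [mul_comm τ]

open Polynomial in
theorem eval_det (W : Matrix (Fin n) (Fin n) ℝ) (τ : ℝ) :
    (polyMat W).det.eval τ = (1 + τ • Lap W).det := by
  rw [← polyMat_map_eval, ← RingHom.map_det, coe_evalRingHom]

open Polynomial in
theorem eval_adjugate (W : Matrix (Fin n) (Fin n) ℝ) (τ : ℝ) (i j : Fin n) :
    ((polyMat W).adjugate i j).eval τ = (1 + τ • Lap W).adjugate i j := by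
  rw [← polyMat_map_eval, ← RingHom.map_adjugate]
  rfl

open Polynomial in
/-- Coefficient form of `(I + X L) adj(I + X L) = det(I + X L) I`. -/
theorem coeff_succ_lap_mul (W : Matrix (Fin n) (Fin n) ℝ) (i j : Fin n) (m : ℕ) :
    ((polyMat W).adjugate i j).coeff (m + 1)
        + ∑ k, Lap W i k * ((polyMat W).adjugate k j).coeff m
      = if i = j then (polyMat W).det.coeff (m + 1) else 0 := by
  have h := congrFun (congrFun (mul_adjugate (polyMat W)) i) j
  simp only [mul_apply, polyMat_apply, add_mul, sum_add_distrib, Matrix.smul_apply, one_apply, smul_eq_mul,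
    ite_mul, one_mul, zero_mul, sum_ite_eq, mem_univ, if_true, mul_assoc, ← mul_sum] at h
  have h' := congrArg (fun p => p.coeff (m + 1)) h
  simpa [coeff_X_mul, finsetSum_coeff, apply_ite (fun p : ℝ[X] => p.coeff (m + 1))] using h'

open Polynomial in
/-- Coefficient form of `adj(I + X L) (I + X L) = det(I + X L) I`. -/
theorem coeff_succ_mul_lap (W : Matrix (Fin n) (Fin n) ℝ) (i j : Fin n) (m : ℕ) :
    ((polyMat W).adjugate i j).coeff (m + 1)
        + ∑ k, ((polyMat W).adjugate i k).coeff m * Lap W k j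
      = if i = j then (polyMat W).det.coeff (m + 1) else 0 := by
  have h := congrFun (congrFun (adjugate_mul (polyMat W)) i) j
  simp only [mul_apply, polyMat_apply, mul_add, sum_add_distrib, Matrix.smul_apply, one_apply, smul_eq_mul,
    mul_ite, mul_one, mul_zero, sum_ite_eq', mem_univ, if_true] at h
  have h2 : ∀ k, (polyMat W).adjugate i k * (X * C (Lap W k j))
      = X * ((polyMat W).adjugate i k * C (Lap W k j)) := fun k => by ring
  simp only [h2, ← mul_sum] at h
  have h' := congrArg (fun p => p.coeff (m + 1)) h
  simpa [coeff_X_mul, finsetSum_coeff, smul_eq_mul, mul_ite,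
    apply_ite (fun p : ℝ[X] => p.coeff (m + 1))] using h'

open Polynomial in
theorem coeff_zero_adjugate (W : Matrix (Fin n) (Fin n) ℝ) (i j : Fin n) :
    ((polyMat W).adjugate i j).coeff 0 = if i = j then 1 else 0 := by
  rw [coeff_zero_eq_eval_zero, eval_adjugate]
  simp [one_apply]

open Polynomial in
theorem coeff_zero_det (W : Matrix (Fin n) (Fin n) ℝ) : (polyMat W).det.coeff 0 = 1 := by
  rw [coeff_zero_eq_eval_zero, eval_det]
  simp

open Polynomial in
/-- No coefficient of the `(i, j)` entry of the adjugate survives if `j` is not reachable from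
`i`: the recursion for the coefficients only involves predecessors of `j`, which are again not
reachable from `i`. -/
theorem coeff_adjugate_of_not_reach {W : Matrix (Fin n) (Fin n) ℝ}
    (hW0 : ∀ i j, 0 ≤ W i j) (hWd : ∀ i, W i i = 0) (i : Fin n) (m : ℕ) :
    ∀ j, ¬ Reach W i j → ((polyMat W).adjugate i j).coeff m = 0 := by
  induction m with
  | zero =>
    intro j hj
    rw [coeff_zero_adjugate, if_neg]
    rintro rfl
    exact hj Relation.ReflTransGen.refl
  | succ m ih =>
    intro j hj
    have hij : i ≠ j := by
      rintro rfl
      exact hj Relation.ReflTransGen.refl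
    have h := coeff_succ_mul_lap W i j m
    have hpred : ∑ k, ((polyMat W).adjugate i k).coeff m * W k j = 0 := by
      refine sum_eq_zero fun k _ => ?_
      rcases (hW0 k j).eq_or_lt with hk | hk
      · rw [← hk, mul_zero]
      · rw [ih k fun hr => hj (hr.tail hk), zero_mul]
    rw [vec_mul_lap hWd, if_neg hij, ih j hj, hpred] at h
    simpa using h

/-! ### Nonnegative kernel vectors of the Laplacian and source knots -/

/-- The support of a nonnegative kernel vector of `L` is closed under predecessors. -/
theorem support_pred {W : Matrix (Fin n) (Fin n) ℝ} (hW0 : ∀ i j, 0 ≤ W i j)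
    (hWd : ∀ i, W i i = 0) {x : Fin n → ℝ} (hx : ∀ k, 0 ≤ x k)
    (hLx : ∀ i, ∑ k, Lap W i k * x k = 0) {p k : Fin n} (hpk : 0 < W p k) (hk : 0 < x k) :
    0 < x p := by
  have h := hLx p
  rw [lap_mul_vec hWd, sub_eq_zero] at h
  have h1 : 0 < ∑ k, W p k * x k :=
    sum_pos' (fun a _ => mul_nonneg (hW0 _ _) (hx _)) ⟨k, mem_univ _, mul_pos hpk hk⟩
  rcases (hx p).eq_or_lt with h2 | h2
  · rw [← h, ← h2, mul_zero] at h1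
    exact absurd h1 (lt_irrefl _)
  · exact h2

/-- If `x ≥ 0` and `L x = 0`, no arc enters the set `R` of vertices reachable from `i` at a
vertex of the support of `x`: summing `L x = 0` over `R`, all arcs inside `R` cancel, no arc
leaves `R`, and what remains is a sum of nonnegative terms over the arcs entering `R`. -/
theorem pred_reach_of_support {W : Matrix (Fin n) (Fin n) ℝ} (hW0 : ∀ i j, 0 ≤ W i j)
    (hWd : ∀ i, W i i = 0) {x : Fin n → ℝ} (hx : ∀ k, 0 ≤ x k)
    (hLx : ∀ i, ∑ k, Lap W i k * x k = 0) {i p k : Fin n} (hik : Reach W i k)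
    (hpk : 0 < W p k) (hk : 0 < x k) : Reach W i p := by
  classical
  by_contra hp
  set R : Finset (Fin n) := univ.filter fun v => Reach W i v with hR
  have hmem : ∀ v, v ∈ R ↔ Reach W i v := fun v => by simp [hR]
  have hout : ∀ a ∈ R, ∀ v, v ∉ R → W a v = 0 := by
    intro a ha v hv
    by_contra h
    exact hv ((hmem v).2 (((hmem a).1 ha).tail (lt_of_le_of_ne (hW0 _ _) (Ne.symm h))))
  have h1 : ∑ a ∈ R, ((∑ v, W v a) * x a - ∑ v, W a v * x v) = 0 :=
    sum_eq_zero fun a _ => by rw [← lap_mul_vec hWd, hLx]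
  have h2 : ∑ a ∈ R, ∑ v, W a v * x v = ∑ a ∈ R, (∑ v ∈ R, W v a) * x a := by
    have : ∀ a ∈ R, ∑ v, W a v * x v = ∑ v ∈ R, W a v * x v := fun a ha =>
      (sum_subset (subset_univ R) fun v _ hv => by rw [hout a ha v hv, zero_mul]).symm
    rw [sum_congr rfl this, sum_comm]
    simp_rw [sum_mul]
  rw [sum_sub_distrib, h2, ← sum_sub_distrib] at h1
  have h3 : ∀ a ∈ R, (∑ v, W v a) * x a - (∑ v ∈ R, W v a) * x a
      = (∑ v ∈ Rᶜ, W v a) * x a := by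
    intro a _
    rw [← sum_add_sum_compl R (fun v => W v a)]; ring
  rw [sum_congr rfl h3] at h1
  have h4 : 0 < ∑ v ∈ Rᶜ, W v k :=
    sum_pos' (fun a _ => hW0 _ _) ⟨p, by simpa [hmem] using hp, hpk⟩
  have h5 : 0 < ∑ a ∈ R, (∑ v ∈ Rᶜ, W v a) * x a :=
    sum_pos' (fun a _ => mul_nonneg (sum_nonneg fun v _ => hW0 _ _) (hx a))
      ⟨k, (hmem k).2 hik, mul_pos h4 hk⟩
  exact h5.ne' h1

theorem reach_of_reach_support {W : Matrix (Fin n) (Fin n) ℝ} (hW0 : ∀ i j, 0 ≤ W i j)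
    (hWd : ∀ i, W i i = 0) {x : Fin n → ℝ} (hx : ∀ k, 0 ≤ x k)
    (hLx : ∀ i, ∑ k, Lap W i k * x k = 0) {i u : Fin n} (hi : 0 < x i) (hu : Reach W u i) :
    Reach W i u := by
  -- Walk backwards from `i` to `u`, staying in the support of `x`.
  have : Reach W i u ∧ 0 < x u := by
    induction hu using Relation.ReflTransGen.head_induction_on with
    | refl => exact ⟨Relation.ReflTransGen.refl, hi⟩
    | head hac _ ih =>
      exact ⟨pred_reach_of_support hW0 hWd hx hLx ih.1 hac ih.2,
        support_pred hW0 hWd hx hLx hac ih.2⟩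
  exact this.1

/-- A vertex lies in a source knot iff it reaches every vertex that reaches it. -/
theorem mem_sourceKnot_iff (W : Matrix (Fin n) (Fin n) ℝ) (i : Fin n) :
    (∃ K : Finset (Fin n), IsSourceKnot W K ∧ i ∈ K) ↔ ∀ u, Reach W u i → Reach W i u := by
  classical
  constructor
  · rintro ⟨K, ⟨⟨c, hc⟩, hK⟩, hi⟩ u hu
    have : u ∈ K := by
      induction hu using Relation.ReflTransGen.head_induction_on with
      | refl => exact hi
      | head hac _ ih => exact hK _ _ ih hac
    exact ((hc i).1 hi).2.trans ((hc u).1 this).1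
  · intro h
    refine ⟨univ.filter fun v => Reach W i v ∧ Reach W v i, ⟨⟨i, by simp⟩, ?_⟩, ?_⟩
    · intro a b hb hab
      simp only [mem_filter, mem_univ, true_and] at hb ⊢
      have : Reach W a i := Relation.ReflTransGen.head hab hb.2
      exact ⟨h a this, this⟩
    · exact mem_filter.2 ⟨mem_univ i, Relation.ReflTransGen.refl, Relation.ReflTransGen.refl⟩

/-- The coefficient `Q i j` of the adjugate entry at the degree of the determinant detects top reachability;
here `Q` is only required to have the properties of that coefficient matrix. -/
theorem top_pos_iff {W Q : Matrix (Fin n) (Fin n) ℝ} (hW0 : ∀ i j, 0 ≤ W i j)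
    (hWd : ∀ i, W i i = 0) (hQ0 : ∀ i j, 0 ≤ Q i j)
    (hLQ : ∀ i j, ∑ k, Lap W i k * Q k j = 0) (hQL : ∀ i j, ∑ k, Q i k * Lap W k j = 0)
    (hQs : ∀ j, 0 < ∑ i, Q i j) (hreach : ∀ i j, ¬ Reach W i j → Q i j = 0) (i j : Fin n) :
    ((∀ u, Reach W u i → Reach W i u) ∧ Reach W i j) ↔ 0 < Q i j := by
  constructor
  · rintro ⟨hi, hij⟩
    obtain ⟨k, -, hk⟩ := (sum_pos_iff_of_nonneg fun k _ => hQ0 k i).1 (hQs i)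
    have hki : Reach W k i := by
      by_contra h
      exact hk.ne' (hreach k i h)
    have hcol : ∀ a, Reach W a k → 0 < Q a i := by
      intro a ha
      induction ha using Relation.ReflTransGen.head_induction_on with
      | refl => exact hk
      | head hac _ ih =>
        exact support_pred hW0 hWd (x := fun k => Q k i) (fun k => hQ0 k i)
          (fun a => hLQ a i) hac ih
    have hii : 0 < Q i i := hcol i (hi k hki)
    induction hij with
    | refl => exact hii
    | @tail b c _ hbc ih =>
      have h := hQL i c
      rw [vec_mul_lap hWd, sub_eq_zero] at h
      have h1 : 0 < ∑ k, Q i k * W k c :=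
        sum_pos' (fun a _ => mul_nonneg (hQ0 _ _) (hW0 _ _)) ⟨b, mem_univ _, mul_pos ih hbc⟩
      rcases (hQ0 i c).eq_or_lt with h2 | h2
      · rw [← h, ← h2, zero_mul] at h1
        exact absurd h1 (lt_irrefl _)
      · exact h2
  · intro h
    refine ⟨fun u hu => ?_, ?_⟩
    · exact reach_of_reach_support hW0 hWd (x := fun k => Q k j) (fun k => hQ0 k j)
        (fun a => hLQ a j) h hu
    · by_contra h'
      exact h.ne' (hreach i j h')

/-! ### Values of polynomials with natural coefficients -/

open Polynomial in
theorem eval_natPoly (p : ℕ[X]) {d : ℕ} (hp : p.natDegree ≤ d) (τ : ℝ) :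
    (p.map (Nat.castRingHom ℝ)).eval τ = ∑ k ∈ range (d + 1), (p.coeff k : ℝ) * τ ^ k := by
  rw [eval_map, eval₂_eq_sum_range' _ (Nat.lt_succ_of_le hp)]
  simp

open Polynomial in
theorem eval_natPoly_le (p : ℕ[X]) {d : ℕ} (hp : p.natDegree ≤ d) {τ : ℝ} (hτ : 1 ≤ τ) :
    (p.map (Nat.castRingHom ℝ)).eval τ ≤ τ ^ d * (p.map (Nat.castRingHom ℝ)).eval 1 := by
  rw [eval_natPoly p hp, eval_natPoly p hp, mul_sum]
  refine sum_le_sum fun k hk => ?_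
  rw [one_pow, mul_one, mul_comm]
  have : k ≤ d := Nat.lt_succ_iff.1 (mem_range.1 hk)
  gcongr

open Polynomial in
theorem pow_le_eval_natPoly (p : ℕ[X]) {d : ℕ} (hp : p.coeff d ≠ 0) {τ : ℝ} (hτ : 0 ≤ τ) :
    τ ^ d ≤ (p.map (Nat.castRingHom ℝ)).eval τ := by
  rw [eval_natPoly p le_rfl]
  have h1 : (1 : ℝ) ≤ p.coeff d := by exact_mod_cast Nat.one_le_iff_ne_zero.2 hp
  calc τ ^ d ≤ (p.coeff d : ℝ) * τ ^ d := le_mul_of_one_le_left (pow_nonneg hτ d) h1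
    _ ≤ _ := single_le_sum (f := fun k => (p.coeff k : ℝ) * τ ^ k) (fun k _ => by positivity)
        (mem_range.2 (Nat.lt_succ_of_le (le_natDegree_of_ne_zero hp)))

open Polynomial in
/-- Comparison of two polynomials `q ≤ D` with natural coefficients and `D(0) = 1`: at
`τ = D(1)²`, the value `q(τ) / D(τ)` is at least `1 / D(1)` exactly when `q` has the same degree
as `D`. -/
theorem eval_le_iff (D q : ℕ[X]) (h0 : D.coeff 0 = 1) (hq : ∀ k, q.coeff k ≤ D.coeff k)
    {σ : ℝ} (hσ : σ = (D.map (Nat.castRingHom ℝ)).eval 1) :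
    (D.map (Nat.castRingHom ℝ)).eval (σ ^ 2) ≤ σ * (q.map (Nat.castRingHom ℝ)).eval (σ ^ 2) ↔
      q.coeff D.natDegree ≠ 0 := by
  have hD0 : D ≠ 0 := by rintro rfl; simp at h0
  have hdeg : q.natDegree ≤ D.natDegree := natDegree_le_iff_coeff_eq_zero.2 fun k hk =>
    Nat.le_zero.1 (by rw [← coeff_eq_zero_of_natDegree_lt hk]; exact hq k)
  have hσ1 : 1 ≤ σ := by
    have := pow_le_eval_natPoly D (d := 0) (by simp [h0]) zero_le_one
    rw [hσ]; simpa using this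
  have hτ1 : 1 ≤ σ ^ 2 := one_le_pow₀ hσ1
  constructor
  · intro h hc
    refine absurd h (not_le.2 ?_)
    rcases Nat.eq_zero_or_pos D.natDegree with hd | hd
    · -- `D` is constant, so `q`, having no constant coefficient, vanishes.
      have : q = 0 := by
        rw [hd] at hc hdeg
        rw [eq_C_of_natDegree_le_zero hdeg, hc, C_0]
      rw [this]
      have := pow_le_eval_natPoly D (d := 0) (by simp [h0]) (by positivity : 0 ≤ σ ^ 2)
      simp only [pow_zero] at this
      simpa using lt_of_lt_of_le one_pos this
    · obtain ⟨e, he⟩ : ∃ e, D.natDegree = e + 1 := ⟨D.natDegree - 1, by omega⟩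
      rw [he] at hc hdeg
      have hqe : q.natDegree ≤ e := natDegree_le_iff_coeff_eq_zero.2 fun k hk => by
        rcases Nat.lt_or_ge (e + 1) k with h1 | h1
        · exact coeff_eq_zero_of_natDegree_lt (by omega)
        · rw [show k = e + 1 by omega, hc]
      have hq1 : (q.map (Nat.castRingHom ℝ)).eval 1 ≤ σ := by
        rw [hσ, eval_natPoly q hdeg, eval_natPoly D he.le]
        refine sum_le_sum fun k _ => ?_
        gcongr
        exact hq k
      have hlt : (σ ^ 2) ^ (e + 1) < (D.map (Nat.castRingHom ℝ)).eval (σ ^ 2) := by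
        rw [eval_natPoly D he.le, sum_range_succ, sum_range_succ', h0, ← he]
        have h1 : (1 : ℝ) ≤ D.coeff D.natDegree := by
          exact_mod_cast Nat.one_le_iff_ne_zero.2
            (by rw [coeff_natDegree]; exact leadingCoeff_ne_zero.2 hD0)
        have h2 : (σ ^ 2) ^ D.natDegree ≤ D.coeff D.natDegree * (σ ^ 2) ^ D.natDegree :=
          le_mul_of_one_le_left (by positivity) h1
        have h3 : 0 ≤ ∑ k ∈ range e, (D.coeff (k + 1) : ℝ) * (σ ^ 2) ^ (k + 1) :=
          sum_nonneg fun k _ => by positivity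
        simp only [Nat.cast_one, pow_zero, mul_one]
        linarith
      calc σ * (q.map (Nat.castRingHom ℝ)).eval (σ ^ 2)
          ≤ σ * ((σ ^ 2) ^ e * σ) := by
            gcongr
            exact (eval_natPoly_le q hqe hτ1).trans (by gcongr)
        _ = (σ ^ 2) ^ (e + 1) := by ring
        _ < _ := hlt
  · intro hc
    calc (D.map (Nat.castRingHom ℝ)).eval (σ ^ 2)
        ≤ (σ ^ 2) ^ D.natDegree * σ := by
          have := eval_natPoly_le D le_rfl hτ1
          rwa [← hσ] at this
      _ = σ * (σ ^ 2) ^ D.natDegree := mul_comm _ _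
      _ ≤ _ := by
        gcongr
        exact pow_le_eval_natPoly q hc (by positivity)

/-- Suppose all arc weights of `Γ` equal 1 and let `σ = det(I + L)`.
Then for all vertices `i, j`: `i` belongs to a source knot of `Γ` and `j` is reachable from
`i` if and only if `J_ij(σ²) ≥ σ⁻¹`, where `J(τ) = (I + τL)⁻¹`. -/
theorem top_reachability_via_resolvent (n : ℕ) (hn : 1 < n)
    (W : Matrix (Fin n) (Fin n) ℝ)
    (hW0 : ∀ i j, 0 ≤ W i j) (hWd : ∀ i, W i i = 0)
    (hW01 : ∀ i j, W i j = 0 ∨ W i j = 1) (i j : Fin n) :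
    ((∃ K : Finset (Fin n), IsSourceKnot W K ∧ i ∈ K) ∧ Reach W i j) ↔
      ((1 + Lap W).det)⁻¹ ≤ (1 + ((1 + Lap W).det) ^ 2 • Lap W)⁻¹ i j := by
  obtain ⟨hdet, hadj⟩ := IsLapForm.mem univ (polyMat W) (polyMat_isLapForm hWd hW01)
    (fun j hj => absurd (mem_univ j) hj)
  obtain ⟨D, hD⟩ := hdet
  choose q hq using hadj
  simp only [Polynomial.coe_mapRingHom] at hD hq
  have hqc : ∀ i j k, ((polyMat W).adjugate i j).coeff k = ((q i j).coeff k : ℝ) :=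
    fun i j k => by rw [← hq]; simp
  have hDc : ∀ k, (polyMat W).det.coeff k = (D.coeff k : ℝ) := fun k => by rw [← hD]; simp
  -- The column sums of `I + X L` are `1`, hence those of the adjugate are the determinant.
  have hsum : ∀ j k, ∑ i, (q i j).coeff k = D.coeff k := by
    intro j k
    have h := det_eq_sum_adjugate (polyMat W) j
    simp only [polyMat_col_sum hWd, one_mul] at h
    have h' := congrArg (fun p => p.coeff k) h
    simp only [Polynomial.finsetSum_coeff, hDc, hqc] at h'
    exact_mod_cast h'.symm
  have hle : ∀ i j k, (q i j).coeff k ≤ D.coeff k := fun i j k => by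
    rw [← hsum j k]
    exact single_le_sum (f := fun i => (q i j).coeff k) (fun _ _ => Nat.zero_le _) (mem_univ i)
  have h0 : D.coeff 0 = 1 := by
    have := hDc 0
    rw [coeff_zero_det] at this
    exact_mod_cast this.symm
  have hD0 : D ≠ 0 := by rintro rfl; simp at h0
  have hDs : D.coeff (D.natDegree + 1) = 0 :=
    Polynomial.coeff_eq_zero_of_natDegree_lt (Nat.lt_succ_self _)
  have hqs : ∀ i j, (q i j).coeff (D.natDegree + 1) = 0 := fun i j =>
    Nat.le_zero.1 (hDs ▸ hle i j _)
  have htop := top_pos_iff (Q := fun i j => ((q i j).coeff D.natDegree : ℝ)) hW0 hWd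
    (fun i j => Nat.cast_nonneg _)
    (fun i j => by
      have h := coeff_succ_lap_mul W i j D.natDegree
      simpa [hqc, hDc, hqs, hDs] using h)
    (fun i j => by
      have h := coeff_succ_mul_lap W i j D.natDegree
      simpa [hqc, hDc, hqs, hDs] using h)
    (fun j => by
      rw [← Nat.cast_sum, hsum, Nat.cast_pos, Polynomial.coeff_natDegree]
      exact Nat.pos_of_ne_zero (Polynomial.leadingCoeff_ne_zero.2 hD0))
    (fun i j h => by
      rw [← hqc]
      exact coeff_adjugate_of_not_reach hW0 hWd i _ j h) i j
  rw [mem_sourceKnot_iff, htop, Nat.cast_pos, Nat.pos_iff_ne_zero]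
  have hσ : (1 + Lap W).det = (D.map (Nat.castRingHom ℝ)).eval 1 := by
    rw [hD, eval_det, one_smul]
  rw [← eval_le_iff D (q i j) h0 (hle i j) hσ]
  have hpos : ∀ τ : ℝ, 0 ≤ τ → 0 < (D.map (Nat.castRingHom ℝ)).eval τ := fun τ hτ =>
    lt_of_lt_of_le one_pos (by
      simpa using pow_le_eval_natPoly D (d := 0) (by simp [h0]) hτ)
  have hσ0 : 0 < (1 + Lap W).det := hσ ▸ hpos 1 zero_le_one
  have hτ0 := hpos ((1 + Lap W).det ^ 2) (by positivity)
  rw [Matrix.inv_def, Matrix.smul_apply, ← eval_det, ← eval_adjugate, ← hD, ← hq, Ring.inverse_eq_inv',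
    smul_eq_mul, inv_mul_eq_div, le_div_iff₀ hτ0, inv_mul_le_iff₀ hσ0]

end ForestMatrix
end

section
/- For every τ > 0, the matrix P = (p_ij) = (I + τL)^{−1} satisfies the following convexity property: if p_ki > p_ti and i ≠ k, then Γ contains a directed path from k to i such that the difference p_kj − p_tj strictly decreases as j advances from k to i along this path (i.e., for consecutive vertices j, j' on the path, p_kj − p_tj > p_kj' − p_tj'). -/
/-!
Fix the rows `k` and `t` and put `d j = P k j - P t j`. Since `P (1 + τ L) = 1`, reading the
column `j` of this identity gives the discrete Poisson equation
`d j = τ ∑ m, W m j (d m - d j) + δ k j - δ t j` (`row_equation` applied to both rows).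
So `d` obeys a maximum principle: at a vertex `j ≠ k` with `d j > 0` the sum must be positive, whence
some arc `(m, j)` enters `j` from a vertex with `d m > d j` (`exists_better_pred`). Going backwards
from `i`, where `d i > 0`, the values of `d` keep increasing; as there are finitely many vertices,
the walk can only stop at `k` (`exists_descending_path`), and strict monotonicity makes it a path.
Invertibility of `1 + τ L` holds because this matrix is strictly diagonally dominant by columns.
-/

open Matrix Finset

namespace ForestMatrix

variable {n : ℕ}

/-- Strict column diagonal dominance: the diagonal entry exceeds the sum of the absolute values
of the off-diagonal entries of its column by exactly `1`. -/
lemma isUnit_det_one_add_smul_Lap {n : ℕ} (W : Matrix (Fin n) (Fin n) ℝ)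
    (hW0 : ∀ i j, 0 ≤ W i j) (τ : ℝ) (hτ : 0 < τ) :
    IsUnit (1 + τ • Lap W).det := by
  rw [isUnit_iff_ne_zero]
  apply det_ne_zero_of_sum_col_lt_diag
  intro j
  have h1 : ∑ m ∈ univ.erase j, ‖(1 + τ • Lap W) m j‖ = τ * ∑ m ∈ univ.erase j, W m j := by
    rw [mul_sum]
    refine sum_congr rfl fun m hm => ?_
    have hmj : m ≠ j := ne_of_mem_erase hm
    simp [Lap, hmj, abs_of_pos hτ, abs_of_nonneg (hW0 m j)]
  have h2 : (1 + τ • Lap W) j j = 1 + τ * ∑ m ∈ univ.erase j, W m j := by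
    simp [Lap]
  rw [h1, h2]
  exact lt_of_lt_of_le (by linarith) (le_abs_self _)

/-- The entry `(k, j)` of `P (1 + τ L) = 1`. The diagonal term of the sum vanishes, so the
sum may run over all vertices. -/
lemma row_equation {n : ℕ} (W P : Matrix (Fin n) (Fin n) ℝ) (τ : ℝ)
    (h : P * (1 + τ • Lap W) = 1) (k j : Fin n) :
    P k j = τ * ∑ m, W m j * (P k m - P k j) + (1 : Matrix (Fin n) (Fin n) ℝ) k j := by
  have hkj := congrFun (congrFun h k) j
  rw [mul_add, mul_one, mul_smul_comm, Matrix.add_apply, Matrix.smul_apply, smul_eq_mul, mul_apply,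
    ← add_sum_erase _ _ (mem_univ j)] at hkj
  have h1 : ∑ m ∈ univ.erase j, P k m * Lap W m j = ∑ m ∈ univ.erase j, -(W m j * P k m) := by
    refine sum_congr rfl fun m hm => ?_
    simp [Lap, ne_of_mem_erase hm, mul_comm]
  have h2 : Lap W j j = ∑ m ∈ univ.erase j, W m j := by simp [Lap]
  rw [h1, h2, sum_neg_distrib] at hkj
  rw [← hkj, ← add_sum_erase _ _ (mem_univ j)]
  simp only [mul_sub, sum_sub_distrib, ← sum_mul]
  ring

/-- The maximum principle: a vertex other than `k` where `P k · - P t ·` is positive has an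
in-neighbour where this difference is larger. -/
lemma exists_better_pred {n : ℕ} (W P : Matrix (Fin n) (Fin n) ℝ)
    (hW0 : ∀ i j, 0 ≤ W i j) (τ : ℝ) (hτ : 0 < τ) (h : P * (1 + τ • Lap W) = 1)
    (k t j : Fin n) (hj : j ≠ k) (hpos : 0 < P k j - P t j) :
    ∃ m, 0 < W m j ∧ P k j - P t j < P k m - P t m := by
  by_contra! hcon
  have hsum : ∑ m, W m j * (P k m - P k j) - ∑ m, W m j * (P t m - P t j) ≤ 0 := by
    rw [← sum_sub_distrib]
    refine sum_nonpos fun m _ => ?_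
    rcases (hW0 m j).eq_or_lt with h0 | h0
    · simp [← h0]
    · nlinarith [hcon m h0]
  have hk := row_equation W P τ h k j
  have ht := row_equation W P τ h t j
  rw [one_apply_ne hj.symm] at hk
  have ht0 : 0 ≤ (1 : Matrix (Fin n) (Fin n) ℝ) t j := by
    rw [one_apply]; split_ifs <;> norm_num
  nlinarith [mul_nonpos_of_nonneg_of_nonpos hτ.le hsum]

/-- If every vertex other than `k` where `d > 0` has an `r`-predecessor with a larger value of
`d`, then each vertex with `d > 0` is the end of an `r`-chain from `k` along which `d` decreases. -/
lemma exists_descending_path {α : Type*} [Finite α] (r : α → α → Prop) (d : α → ℝ) (k : α)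
    (hstep : ∀ j, j ≠ k → 0 < d j → ∃ m, r m j ∧ d j < d m) (i : α) (hi : 0 < d i) :
    ∃ l : List α, l.head? = some k ∧ l.getLast? = some i ∧
      l.IsChain (fun a b => r a b ∧ d b < d a) := by
  have : IsTrans α (fun a b => d b < d a) := ⟨fun _ _ _ h₁ h₂ => h₂.trans h₁⟩
  have : Std.Irrefl (fun a b : α => d b < d a) := ⟨fun _ => lt_irrefl _⟩
  -- Induction along decreasing `d`, well-founded because there are finitely many vertices.
  induction i using (Finite.wellFounded_of_trans_of_irrefl (fun a b : α => d b < d a)).induction with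
  | _ j ih =>
    by_cases hj : j = k
    · exact ⟨[k], by simp [hj]⟩
    · obtain ⟨m, hr, hm⟩ := hstep j hj hi
      obtain ⟨l, hhead, hlast, hc⟩ := ih m hm (hi.trans hm)
      refine ⟨l ++ [j], by simp [hhead], by simp, ?_⟩
      rw [List.isChain_append]
      refine ⟨hc, List.isChain_singleton _, fun x hx y hy => ?_⟩
      simp only [hlast, Option.mem_def, Option.some.injEq, List.head?_cons] at hx hy
      subst hx hy
      exact ⟨hr, hm⟩

/-- convexity. For every `τ > 0` and `P = (I + τL)⁻¹`: if
`p_ki > p_ti` and `i ≠ k`, then `Γ` contains a directed path from `k` to `i` along which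
the difference `p_kj − p_tj` strictly decreases. -/
theorem convexity_of_accessibility (n : ℕ) (hn : 1 < n)
    (W : Matrix (Fin n) (Fin n) ℝ)
    (hW0 : ∀ i j, 0 ≤ W i j) (hWd : ∀ i, W i i = 0)
    (τ : ℝ) (hτ : 0 < τ)
    (P : Matrix (Fin n) (Fin n) ℝ) (hP : P = (1 + τ • Lap W)⁻¹)
    (i k t : Fin n) (hik : i ≠ k) (hgt : P t i < P k i) :
    ∃ l : List (Fin n), l ≠ [] ∧ l.head? = some k ∧ l.getLast? = some i ∧ l.Nodup ∧
      l.Chain' (fun a b => 0 < W a b) ∧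
      l.Chain' (fun a b => P k b - P t b < P k a - P t a) := by
  have hinv : P * (1 + τ • Lap W) = 1 :=
    hP ▸ nonsing_inv_mul _ (isUnit_det_one_add_smul_Lap W hW0 τ hτ)
  obtain ⟨l, hhead, hlast, hc⟩ := exists_descending_path (fun a b => 0 < W a b)
    (fun j => P k j - P t j) k
    (fun j hj hpos => exists_better_pred W P hW0 τ hτ hinv k t j hj hpos) i (sub_pos.2 hgt)
  have hdec : l.IsChain (fun a b => P k b - P t b < P k a - P t a) := hc.imp fun _ _ h => h.2
  refine ⟨l, ?_, hhead, hlast, ?_, hc.imp fun _ _ h => h.1, hdec⟩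
  · rintro rfl
    simp at hhead
  · have : IsTrans (Fin n) (fun a b => P k b - P t b < P k a - P t a) :=
      ⟨fun _ _ _ h₁ h₂ => h₂.trans h₁⟩
    refine hdec.pairwise.imp ?_
    rintro a _ h rfl
    exact lt_irrefl _ h

end ForestMatrix
end
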